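/- Let Θ' < Θ be polarizations. Then: (a) C¹(R) ⊂ W¹(R) ⊂ W_*(R;Θ) ⊂ L²(R) and W^{1−ε}(R) ⊂ W_†(R;Θ) ⊂ W^{−ε}(R), all inclusions being continuous; (b) W_*(R;Θ) ⊂ W_*(R;Θ') and W_†(R;Θ) ⊂ W_†(R;Θ') continuously; (c) the inclusion W_*(R;Θ) ⊂ W_†(R;Θ) is a compact operator. -/

import Mathlib

noncomputable section
open MeasureTheory Filter Finset Function Set Real Topology
open scoped ENNReal NNReal

namespace AngleMult

/-! ### Anisotropic Sobolev norms on `ℝ²` -/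

/-- Euclidean magnitude on `ℝ × ℝ`. -/
def en (v : ℝ × ℝ) : ℝ := Real.sqrt (v.1 ^ 2 + v.2 ^ 2)

/-- Fourier transform on `ℝ²`. -/
def FT (u : ℝ × ℝ → ℂ) (ξ : ℝ × ℝ) : ℂ :=
  ∫ x : ℝ × ℝ, Complex.exp (-(2 * Real.pi * (x.1 * ξ.1 + x.2 * ξ.2)) * Complex.I) * u x

/-- Inverse Fourier transform on `ℝ²`. -/
def invFT (u : ℝ × ℝ → ℂ) (x : ℝ × ℝ) : ℂ :=
  ∫ ξ : ℝ × ℝ, Complex.exp ((2 * Real.pi * (x.1 * ξ.1 + x.2 * ξ.2)) * Complex.I) * u ξ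

/-- The rectangle `R = (-η,η) × (δ,2δ)`. -/
def Rset (η δ : ℝ) : Set (ℝ × ℝ) := Set.Ioo (-η) η ×ˢ Set.Ioo δ (2 * δ)

/-- The rectangle `Q = (-2η,2η) × (0,3δ)`. -/
def Qset (η δ : ℝ) : Set (ℝ × ℝ) := Set.Ioo (-(2 * η)) (2 * η) ×ˢ Set.Ioo 0 (3 * δ)

/-- `C ⋐ C'`: the closure of `C` is contained in the interior of `C'` except for the
origin. -/
def Csub (C C' : Set (ℝ × ℝ)) : Prop := closure C \ {0} ⊆ interior C'

/-- A polarization `Θ = (C₊, C₋, φ₊, φ₋)`: a pair of closed cones intersecting only at `0`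
together with smooth functions on the unit circle (encoded as positively homogeneous
functions of degree `0` on `ℝ² ∖ {0}`) adapted to them. -/
structure Polarization where
  Cp : Set (ℝ × ℝ)
  Cm : Set (ℝ × ℝ)
  phip : ℝ × ℝ → ℝ
  phim : ℝ × ℝ → ℝ
  closed_p : IsClosed Cp
  closed_m : IsClosed Cm
  cone_p : ∀ (c : ℝ) v, v ∈ Cp → c • v ∈ Cp
  cone_m : ∀ (c : ℝ) v, v ∈ Cm → c • v ∈ Cm
  inter_eq : Cp ∩ Cm = {0}
  smooth_p : ContDiffOn ℝ (⊤ : ℕ∞) phip {v : ℝ × ℝ | v ≠ 0}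
  smooth_m : ContDiffOn ℝ (⊤ : ℕ∞) phim {v : ℝ × ℝ | v ≠ 0}
  homog_p : ∀ c : ℝ, 0 < c → ∀ v, phip (c • v) = phip v
  mem_Icc_p : ∀ v, phip v ∈ Set.Icc (0 : ℝ) 1
  one_on_p : ∀ v ∈ Cp, v ≠ 0 → phip v = 1
  zero_on_m : ∀ v ∈ Cm, v ≠ 0 → phip v = 0
  phim_def : ∀ v, phim v = 1 - phip v

/-- The order `Θ < Θ'` on polarizations: `ℝ² ∖ C'₊ ⋐ C₋`. -/
def PolLt (Θ Θ' : Polarization) : Prop := Csub (Set.univ \ Θ'.Cp) Θ.Cm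

/-- Admissibility of the fixed bump function `χ`. -/
def ChiOK (χ : ℝ → ℝ) : Prop :=
  ContDiff ℝ (⊤ : ℕ∞) χ ∧ (∀ s ≤ (1 : ℝ), χ s = 1) ∧ (∀ s, (2 : ℝ) ≤ s → χ s = 0) ∧
    ∀ s, χ s ∈ Set.Icc (0 : ℝ) 1

/-- The Littlewood-Paley functions `ψ_{Θ,n,σ}` (`σ = true` is `+`, `σ = false` is `-`). -/
def psiLP (χ : ℝ → ℝ) (Θ : Polarization) (n : ℕ) (σ : Bool) (ξ : ℝ × ℝ) : ℝ :=
  if n = 0 then χ (en ξ) / 2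
  else (if σ then Θ.phip ξ else Θ.phim ξ) *
    (χ ((2 : ℝ) ^ (-(n : ℤ)) * en ξ) - χ ((2 : ℝ) ^ (-(n : ℤ) + 1) * en ξ))

/-- The pseudo-differential operator `ψ_{Θ,n,σ}(D) u = 𝓕⁻¹(ψ_{Θ,n,σ} · 𝓕u)`. -/
def psiD (χ : ℝ → ℝ) (Θ : Polarization) (n : ℕ) (σ : Bool) (u : ℝ × ℝ → ℂ) :
    ℝ × ℝ → ℂ :=
  invFT fun ξ => (psiLP χ Θ n σ ξ : ℂ) * FT u ξ

/-- The partial norm `‖u‖^σ_{Θ,p} = (∑_n 2^{2pn} ‖ψ_{Θ,n,σ}·𝓕u‖²_{L²})^{1/2}`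
(`ℝ≥0∞`-valued). -/
def segNorm (χ : ℝ → ℝ) (Θ : Polarization) (p : ℝ) (σ : Bool) (u : ℝ × ℝ → ℂ) : ℝ≥0∞ :=
  (∑' n : ℕ, ENNReal.ofReal ((2 : ℝ) ^ (2 * p * (n : ℝ))) *
      (eLpNorm (fun ξ => (psiLP χ Θ n σ ξ : ℂ) * FT u ξ) 2 volume) ^ 2) ^ (1 / 2 : ℝ)

/-- The anisotropic Sobolev norm `‖u‖_{Θ,p,q}`. -/
def anorm (χ : ℝ → ℝ) (Θ : Polarization) (p q : ℝ) (u : ℝ × ℝ → ℂ) : ℝ≥0∞ :=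
  ((segNorm χ Θ p true u) ^ 2 + (segNorm χ Θ q false u) ^ 2) ^ (1 / 2 : ℝ)

/-- The (usual) Sobolev norm of order `s` of `u`, via the Fourier transform. -/
def wnorm (s : ℝ) (u : ℝ × ℝ → ℂ) : ℝ≥0∞ :=
  eLpNorm (fun ξ => ((1 + en ξ ^ 2) ^ (s / 2) : ℝ) * FT u ξ) 2 volume

/-- `u ∈ C^r(R)`: a `C^r` function supported in `R`. -/
def CrSupp (r : ℕ) (η δ : ℝ) (u : ℝ × ℝ → ℂ) : Prop :=
  ContDiff ℝ r u ∧ Function.support u ⊆ Rset η δ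

/-- `u ∈ C^∞(R)`: a `C^∞` function supported in `R`. -/
def SmoothSupp (η δ : ℝ) (u : ℝ × ℝ → ℂ) : Prop :=
  ContDiff ℝ (⊤ : ℕ∞) u ∧ Function.support u ⊆ Rset η δ

/-!
By Plancherel, all the norms are weighted `L²` norms of `FT u`: the Sobolev norm of order `s` has
weight `(1 + |ξ|²) ^ s`, and the norm `‖·‖_{Θ,p,q}` has weight
`∑ₙ (2 ^ (2pn) ψ_{Θ,n,+}(ξ)² + 2 ^ (2qn) ψ_{Θ,n,-}(ξ)²)`. Since `|ξ|` is comparable to `2 ^ n` where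
`ψ_{Θ,n,±}(ξ) ≠ 0`, which happens for at most two values of `n`, when `q ≤ p` the weight of
`‖·‖_{Θ,p,q}` lies between multiples of `(1 + |ξ|²) ^ q` and `(1 + |ξ|²) ^ p`; thus (a) and (b) are
pointwise inequalities between weights.

For (c), the Fourier transforms of an `L²`-bounded sequence supported in a fixed bounded set are
uniformly bounded and equi-Lipschitz, so a subsequence of them converges pointwise. Low frequencies
then converge by dominated convergence, and high frequencies are uniformly negligible because the
weight of the weaker norm is `o` of the weight of the stronger one at infinity.
-/

section SquareNorm

variable {α E : Type*} [MeasurableSpace α] {μ : Measure α} [NormedAddCommGroup E]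

lemma eLpNorm_two_sq (f : α → E) : eLpNorm f 2 μ ^ 2 = ∫⁻ x, ‖f x‖ₑ ^ 2 ∂μ := by
  simpa using eLpNorm_nnreal_pow_eq_lintegral (f := f) (μ := μ) (p := 2) two_ne_zero

lemma enorm_sub_sq_le (a b : E) : ‖a - b‖ₑ ^ 2 ≤ 2 * (‖a‖ₑ ^ 2 + ‖b‖ₑ ^ 2) :=
  calc ‖a - b‖ₑ ^ 2 ≤ (‖a‖ₑ + ‖b‖ₑ) ^ 2 := by gcongr; exact enorm_sub_le
    _ ≤ 2 * (‖a‖ₑ ^ 2 + ‖b‖ₑ ^ 2) := by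
        have h := ENNReal.rpow_add_le_mul_rpow_add_rpow ‖a‖ₑ ‖b‖ₑ one_le_two
        rw [show (2 : ℝ) - 1 = 1 by norm_num, ENNReal.rpow_one] at h
        exact_mod_cast h

lemma eLpNorm_one_le_of_support_subset {f : α → E} {s : Set α} (hf : AEStronglyMeasurable f μ)
    (hs : support f ⊆ s) : eLpNorm f 1 μ ≤ eLpNorm f 2 μ * μ s ^ (1 / 2 : ℝ) := by
  have h := eLpNorm_le_eLpNorm_mul_rpow_measure_univ (μ := μ.restrict s) one_le_two hf.restrict
  rw [eLpNorm_restrict_eq_of_support_subset hs, eLpNorm_restrict_eq_of_support_subset hs,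
    Measure.restrict_apply_univ] at h
  convert h using 3
  norm_num

lemma integrable_of_memLp_two_of_support_subset {f : α → E} {s : Set α} (hf : MemLp f 2 μ)
    (hs : support f ⊆ s) (hμs : μ s ≠ ∞) : Integrable f μ := by
  rw [← memLp_one_iff_integrable]
  exact ⟨hf.1, (eLpNorm_one_le_of_support_subset hf.1 hs).trans_lt
    (ENNReal.mul_lt_top hf.2 (ENNReal.rpow_lt_top_of_nonneg (by norm_num) hμs))⟩

lemma lintegral_enorm_sq_le_of_support_subset {f : α → E} {s : Set α} {M : ℝ≥0∞}
    (hs : support f ⊆ s) (hM : ∀ x, ‖f x‖ₑ ≤ M) : ∫⁻ x, ‖f x‖ₑ ^ 2 ∂μ ≤ M ^ 2 * μ s := by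
  refine (lintegral_mono fun x => ?_).trans (lintegral_indicator_const_le s (M ^ 2))
  by_cases hx : x ∈ s
  · rw [indicator_of_mem hx]
    gcongr
    exact hM x
  · simp [notMem_support.1 (notMem_subset hs hx)]

end SquareNorm

section Fourier

open FourierTransform SchwartzMap

variable {V : Type*} [NormedAddCommGroup V] [InnerProductSpace ℝ V] [FiniteDimensional ℝ V]
  [MeasurableSpace V] [BorelSpace V]

section Basic

variable {F : Type*} [NormedAddCommGroup F] [NormedSpace ℂ F]

lemma continuous_fourier {f : V → F} (hf : Integrable f) : Continuous (𝓕 f) :=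
  VectorFourier.fourierIntegral_continuous Real.continuous_fourierChar
    (innerSL ℝ).continuous₂ hf

lemma norm_fourier_le (f : V → F) (ξ : V) : ‖𝓕 f ξ‖ ≤ ∫ x, ‖f x‖ :=
  VectorFourier.norm_fourierIntegral_le_integral_norm _ _ _ f ξ

lemma fourier_sub {f g : V → F} (hf : Integrable f) (hg : Integrable g) :
    𝓕 (f - g) = 𝓕 f - 𝓕 g := by
  have h := VectorFourier.fourierIntegral_add Real.continuous_fourierChar
    (L := innerₗ V) (innerSL ℝ).continuous₂ (hf.sub hg) hg
  rw [sub_add_cancel] at h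
  exact (sub_eq_of_eq_add h).symm

lemma integral_fourier_smul_eq [CompleteSpace F] {g : V → ℂ} {f : V → F} (hg : Integrable g)
    (hf : Integrable f) : ∫ ξ, 𝓕 g ξ • f ξ = ∫ x, g x • 𝓕 f x := by
  have h := VectorFourier.integral_fourierIntegral_smul_eq_flip (L := innerₗ V)
    Real.continuous_fourierChar (innerSL ℝ).continuous₂ hg hf
  rwa [flip_innerₗ] at h

end Basic

section Plancherel

variable {F : Type*} [NormedAddCommGroup F] [InnerProductSpace ℂ F] [CompleteSpace F]

/- Both sides agree as tempered distributions: tested against a Schwartz function, each is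
the integral of `f` against its Fourier transform. -/
lemma fourier_toLp_ae_eq {f : V → F} (hf : Integrable f) (hf₂ : MemLp f 2) :
    (𝓕 (hf₂.toLp f) : Lp F 2 (volume : Measure V)) =ᵐ[volume] 𝓕 f := by
  refine ae_eq_of_integral_contDiff_smul_eq ((Lp.memLp _).locallyIntegrable one_le_two)
    (continuous_fourier hf).locallyIntegrable fun g hg hgc => ?_
  have hgc' : HasCompactSupport fun x => (g x : ℂ) :=
    hgc.comp_left (g := fun r : ℝ => (r : ℂ)) Complex.ofReal_zero
  let G : 𝓢(V, ℂ) := hgc'.toSchwartzMap (Complex.ofRealCLM.contDiff.comp hg)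
  have hdistr := congrArg (fun T => T G) (Lp.fourier_toTemperedDistribution_eq (hf₂.toLp f))
  simp only [TemperedDistribution.fourier_apply, Lp.toTemperedDistribution_apply] at hdistr
  calc ∫ x, g x • (𝓕 (hf₂.toLp f) : Lp F 2 (volume : Measure V)) x
      = ∫ x, G x • (𝓕 (hf₂.toLp f) : Lp F 2 (volume : Measure V)) x := rfl
    _ = ∫ x, (𝓕 G) x • hf₂.toLp f x := hdistr.symm
    _ = ∫ x, 𝓕 (G : V → ℂ) x • f x := by
        refine integral_congr_ae ?_
        filter_upwards [hf₂.coeFn_toLp] with x hx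
        rw [hx, SchwartzMap.fourier_coe]
    _ = ∫ x, G x • 𝓕 f x := integral_fourier_smul_eq G.integrable hf
    _ = ∫ x, g x • 𝓕 f x := rfl

theorem eLpNorm_fourier_eq {f : V → F} (hf : Integrable f) (hf₂ : MemLp f 2) :
    eLpNorm (𝓕 f) 2 volume = eLpNorm f 2 volume := by
  have h : eLpNorm (𝓕 (hf₂.toLp f) : Lp F 2 (volume : Measure V)) 2 volume =
      eLpNorm (hf₂.toLp f) 2 volume := by
    have h := Lp.norm_fourier_eq (hf₂.toLp f)
    rwa [Lp.norm_def, Lp.norm_def,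
      ENNReal.toReal_eq_toReal_iff' (Lp.eLpNorm_ne_top _) (Lp.eLpNorm_ne_top _)] at h
  rw [← eLpNorm_congr_ae (fourier_toLp_ae_eq hf hf₂), h, eLpNorm_congr_ae hf₂.coeFn_toLp]

lemma lintegral_enorm_fourier_sq {f : V → F} (hf : Integrable f) (hf₂ : MemLp f 2) :
    ∫⁻ ξ, ‖𝓕 f ξ‖ₑ ^ 2 = ∫⁻ x, ‖f x‖ₑ ^ 2 := by
  rw [← eLpNorm_two_sq, ← eLpNorm_two_sq, eLpNorm_fourier_eq hf hf₂]

end Plancherel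

section Derivative

variable {f : V → ℂ}

lemma lintegral_inner_sq_mul_fourier_le (hf : Integrable f) (hdf : Differentiable ℝ f)
    (hf' : Integrable (fderiv ℝ f)) (hf'₂ : MemLp (fderiv ℝ f) 2) {e : V} (he : ‖e‖ = 1) :
    ∫⁻ ξ, ENNReal.ofReal (inner ℝ e ξ ^ 2) * ‖𝓕 f ξ‖ₑ ^ 2 ≤ ∫⁻ x, ‖fderiv ℝ f x‖ₑ ^ 2 := by
  have hfourier (ξ : V) :
      𝓕 (fun x => fderiv ℝ f x e) ξ = (2 * π * Complex.I * inner ℝ e ξ) * 𝓕 f ξ := by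
    rw [← Real.fourier_continuousLinearMap_apply hf', Real.fourier_fderiv hf hdf hf',
      VectorFourier.fourierSMulRight_apply,
      show (-innerSL ℝ) ξ e = -inner ℝ e ξ from neg_inj.2 (real_inner_comm _ _)]
    simp only [smul_eq_mul, Complex.real_smul, Complex.ofReal_neg]
    ring
  have hbound (ξ : V) : ENNReal.ofReal (inner ℝ e ξ ^ 2) * ‖𝓕 f ξ‖ₑ ^ 2 ≤
      ‖𝓕 (fun x => fderiv ℝ f x e) ξ‖ₑ ^ 2 := by
    rw [hfourier, enorm_mul, mul_pow]
    gcongr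
    rw [← ofReal_norm, ← ENNReal.ofReal_pow (norm_nonneg _)]
    refine ENNReal.ofReal_le_ofReal (sq_le_sq' ?_ ?_) <;>
    · simp only [norm_mul, Complex.norm_real, Complex.norm_I, Complex.norm_ofNat, norm_eq_abs,
        mul_one, abs_of_pos pi_pos]
      nlinarith [pi_gt_three, neg_abs_le (inner ℝ e ξ), le_abs_self (inner ℝ e ξ),
        abs_nonneg (inner ℝ e ξ)]
  calc ∫⁻ ξ, ENNReal.ofReal (inner ℝ e ξ ^ 2) * ‖𝓕 f ξ‖ₑ ^ 2
      ≤ ∫⁻ ξ, ‖𝓕 (fun x => fderiv ℝ f x e) ξ‖ₑ ^ 2 := lintegral_mono hbound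
    _ = ∫⁻ x, ‖fderiv ℝ f x e‖ₑ ^ 2 :=
        lintegral_enorm_fourier_sq (hf'.apply_continuousLinearMap e)
          ((ContinuousLinearMap.apply ℝ ℂ e).comp_memLp' hf'₂)
    _ ≤ ∫⁻ x, ‖fderiv ℝ f x‖ₑ ^ 2 := by
        gcongr with x
        rw [enorm_le_iff_norm_le]
        simpa [he] using (fderiv ℝ f x).le_opNorm e

theorem lintegral_one_add_norm_sq_mul_fourier_le (hf : Integrable f) (hf₂ : MemLp f 2)
    (hdf : Differentiable ℝ f) (hf' : Integrable (fderiv ℝ f)) (hf'₂ : MemLp (fderiv ℝ f) 2) :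
    ∫⁻ ξ, ENNReal.ofReal (1 + ‖ξ‖ ^ 2) * ‖𝓕 f ξ‖ₑ ^ 2 ≤
      (∫⁻ x, ‖f x‖ₑ ^ 2) + Module.finrank ℝ V * ∫⁻ x, ‖fderiv ℝ f x‖ₑ ^ 2 := by
  have hmeas : Measurable (𝓕 f) := (continuous_fourier hf).measurable
  let b := stdOrthonormalBasis ℝ V
  have hsum (ξ : V) : ENNReal.ofReal (1 + ‖ξ‖ ^ 2) * ‖𝓕 f ξ‖ₑ ^ 2 =
      ‖𝓕 f ξ‖ₑ ^ 2 + ∑ i, ENNReal.ofReal (inner ℝ (b i) ξ ^ 2) * ‖𝓕 f ξ‖ₑ ^ 2 := by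
    rw [← Finset.sum_mul, ← ENNReal.ofReal_sum_of_nonneg fun i _ => sq_nonneg _,
      b.sum_sq_inner_right, ENNReal.ofReal_add zero_le_one (sq_nonneg _), add_mul,
      ENNReal.ofReal_one, one_mul]
  simp_rw [hsum]
  rw [lintegral_add_left (by fun_prop), lintegral_finsetSum _ (by fun_prop)]
  refine add_le_add ?_ ?_
  · exact (lintegral_enorm_fourier_sq hf hf₂).le
  · calc ∑ i, ∫⁻ ξ, ENNReal.ofReal (inner ℝ (b i) ξ ^ 2) * ‖𝓕 f ξ‖ₑ ^ 2
        ≤ ∑ _i : Fin (Module.finrank ℝ V), ∫⁻ x, ‖fderiv ℝ f x‖ₑ ^ 2 :=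
          Finset.sum_le_sum fun i _ => lintegral_inner_sq_mul_fourier_le hf hdf hf' hf'₂
            (b.orthonormal.1 i)
      _ = Module.finrank ℝ V * ∫⁻ x, ‖fderiv ℝ f x‖ₑ ^ 2 := by simp

end Derivative

lemma lipschitzWith_fourier_of_support_subset {f : V → ℂ} {r : ℝ} {M : ℝ≥0}
    (hf : Integrable f) (hs : support f ⊆ Metric.closedBall 0 r) (hM : ∫ x, ‖f x‖ ≤ M) :
    LipschitzWith (2 * NNReal.pi * r.toNNReal * M) (𝓕 f) := by
  have hle (v : V) : ‖v‖ * ‖f v‖ ≤ r.toNNReal * ‖f v‖ := by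
    by_cases hv : f v = 0
    · simp [hv]
    · gcongr
      exact (mem_closedBall_zero_iff.1 (hs hv)).trans (Real.le_coe_toNNReal r)
  have hint : Integrable fun v => ‖v‖ * ‖f v‖ :=
    (hf.norm.const_mul r.toNNReal).mono' (by fun_prop) (ae_of_all _ fun v => by simpa using hle v)
  refine lipschitzWith_of_nnnorm_fderiv_le (Real.differentiable_fourier hf hint) fun ξ => ?_
  rw [Real.fderiv_fourier hf hint, ← NNReal.coe_le_coe, coe_nnnorm]
  push_cast
  calc ‖𝓕 (VectorFourier.fourierSMulRight (innerSL ℝ) f) ξ‖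
      ≤ ∫ v, ‖VectorFourier.fourierSMulRight (innerSL ℝ) f v‖ := norm_fourier_le _ ξ
    _ ≤ ∫ v, 2 * π * (r.toNNReal * ‖f v‖) := by
        refine integral_mono_of_nonneg (ae_of_all _ fun _ => norm_nonneg _) (by fun_prop)
          (ae_of_all _ fun v => ?_)
        calc ‖VectorFourier.fourierSMulRight (innerSL ℝ) f v‖
            ≤ 2 * π * ‖innerSL ℝ (E := V)‖ * ‖v‖ * ‖f v‖ :=
              VectorFourier.norm_fourierSMulRight_le _ _ _
          _ ≤ 2 * π * 1 * ‖v‖ * ‖f v‖ := by gcongr; exact norm_innerSL_le ℝ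
          _ = 2 * π * (‖v‖ * ‖f v‖) := by ring
          _ ≤ 2 * π * (r.toNNReal * ‖f v‖) := by
              gcongr _ * ?_
              exact hle v
    _ ≤ 2 * π * r.toNNReal * M := by
        rw [integral_const_mul, integral_const_mul, ← mul_assoc]
        gcongr

end Fourier

section Subsequence

lemma exists_subseq_tendsto_of_lipschitzWith {X Y : Type*} [PseudoMetricSpace X]
    [WeaklyLocallyCompactSpace X] [SigmaCompactSpace X] [MetricSpace Y] {f : ℕ → X → Y}
    {L : ℝ≥0} {s : Set Y} (hf : ∀ n, LipschitzWith L (f n)) (hs : IsCompact s)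
    (hfs : ∀ n x, f n x ∈ s) :
    ∃ φ : ℕ → ℕ, StrictMono φ ∧ ∃ g : X → Y, ∀ x, Tendsto (fun n => f (φ n) x) atTop (𝓝 (g x)) := by
  let S : Set C(X, Y) := {g | LipschitzWith L g ∧ ∀ x, g x ∈ s}
  have himage : ContinuousMap.toFun '' S = {g | LipschitzWith L g} ∩ univ.pi fun _ => s := by
    ext g
    refine ⟨?_, fun hg => ⟨⟨g, hg.1.continuous⟩, ⟨hg.1, fun x => hg.2 x (mem_univ x)⟩, rfl⟩⟩
    rintro ⟨g, hg, rfl⟩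
    exact ⟨hg.1, fun x _ => hg.2 x⟩
  have hS : IsCompact S := by
    refine ArzelaAscoli.isCompact_of_equicontinuous S ?_ ?_
    · rw [himage]
      exact (isCompact_univ_pi fun _ => hs).inter_left (isClosed_setOfPred_lipschitzWith L)
    · exact (LipschitzWith.uniformEquicontinuous _ L fun g => g.2.1).equicontinuous
  obtain ⟨g, -, φ, hφ, hg⟩ :=
    hS.tendsto_subseq (x := fun n => ⟨f n, (hf n).continuous⟩) fun n => ⟨hf n, hfs n⟩
  exact ⟨φ, hφ, g, fun x => ((continuous_eval_const x).tendsto g).comp hg⟩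

variable {V : Type*} [NormedAddCommGroup V] [InnerProductSpace ℝ V] [FiniteDimensional ℝ V]
  [MeasurableSpace V] [BorelSpace V]

open FourierTransform in
theorem exists_subseq_tendsto_fourier {f : ℕ → V → ℂ} {s : Set V} (hs : Bornology.IsBounded s)
    (hfs : ∀ n, support (f n) ⊆ s) (hf : ∀ n, Integrable (f n)) {M : ℝ≥0}
    (hM : ∀ n, ∫ x, ‖f n x‖ ≤ M) :
    ∃ φ : ℕ → ℕ, StrictMono φ ∧
      ∃ g : V → ℂ, ∀ ξ, Tendsto (fun n => 𝓕 (f (φ n)) ξ) atTop (𝓝 (g ξ)) := by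
  obtain ⟨r, hr⟩ := hs.subset_closedBall 0
  have : ProperSpace V := FiniteDimensional.proper_real V
  exact exists_subseq_tendsto_of_lipschitzWith
    (fun n => lipschitzWith_fourier_of_support_subset (hf n) ((hfs n).trans hr) (hM n))
    (isCompact_closedBall 0 (M : ℝ))
    fun n ξ => mem_closedBall_zero_iff.2 ((norm_fourier_le _ ξ).trans (hM n))

end Subsequence

section Plane

lemma en_eq_norm_toLp (v : ℝ × ℝ) : en v = ‖WithLp.toLp 2 v‖ := by
  rw [WithLp.prod_norm_eq_of_L2, en]
  simp

lemma en_nonneg (ξ : ℝ × ℝ) : 0 ≤ en ξ := Real.sqrt_nonneg _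

lemma continuous_en : Continuous en := by unfold en; fun_prop

lemma integral_comp_ofLp {E : Type*} [NormedAddCommGroup E] [NormedSpace ℝ E] (g : ℝ × ℝ → E) :
    ∫ x : WithLp 2 (ℝ × ℝ), g (WithLp.ofLp x) = ∫ x, g x :=
  (WithLp.volume_preserving_ofLp ℝ ℝ).integral_comp
    (MeasurableEquiv.toLp 2 (ℝ × ℝ)).symm.measurableEmbedding g

lemma lintegral_comp_ofLp (g : ℝ × ℝ → ℝ≥0∞) :
    ∫⁻ x : WithLp 2 (ℝ × ℝ), g (WithLp.ofLp x) = ∫⁻ x, g x :=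
  (WithLp.volume_preserving_ofLp ℝ ℝ).lintegral_comp_emb
    (MeasurableEquiv.toLp 2 (ℝ × ℝ)).symm.measurableEmbedding g

variable {u v : ℝ × ℝ → ℂ}

lemma integrable_comp_ofLp (hu : Integrable u) : Integrable (u ∘ WithLp.ofLp (p := 2)) :=
  (WithLp.volume_preserving_ofLp ℝ ℝ).integrable_comp_of_integrable hu

lemma memLp_comp_ofLp (hu : MemLp u 2) : MemLp (u ∘ WithLp.ofLp (p := 2)) 2 :=
  hu.comp_measurePreserving (WithLp.volume_preserving_ofLp ℝ ℝ)

open FourierTransform in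
lemma FT_eq_fourier (u : ℝ × ℝ → ℂ) :
    FT u = 𝓕 (u ∘ WithLp.ofLp (p := 2)) ∘ WithLp.toLp 2 := by
  ext ξ
  rw [comp_apply, Real.fourier_eq', FT, ← integral_comp_ofLp]
  congr 1
  ext x
  rw [smul_eq_mul, comp_apply]
  congr 2
  simp only [WithLp.prod_inner_apply, RCLike.inner_apply, conj_trivial]
  push_cast
  ring

lemma continuous_FT (hu : Integrable u) : Continuous (FT u) := by
  rw [FT_eq_fourier]
  exact (continuous_fourier (integrable_comp_ofLp hu)).comp (WithLp.prod_continuous_toLp 2 ℝ ℝ)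

lemma FT_sub (hu : Integrable u) (hv : Integrable v) : FT (u - v) = FT u - FT v := by
  rw [FT_eq_fourier, FT_eq_fourier, FT_eq_fourier, ← Pi.sub_comp,
    ← fourier_sub (integrable_comp_ofLp hu) (integrable_comp_ofLp hv), Pi.sub_comp]

lemma norm_FT_le (u : ℝ × ℝ → ℂ) (ξ : ℝ × ℝ) : ‖FT u ξ‖ ≤ ∫ x, ‖u x‖ := by
  rw [FT_eq_fourier, ← integral_comp_ofLp]
  exact norm_fourier_le _ _

theorem eLpNorm_FT_eq (hu : Integrable u) (hu₂ : MemLp u 2) :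
    eLpNorm (FT u) 2 volume = eLpNorm u 2 volume := by
  rw [FT_eq_fourier, eLpNorm_comp_measurePreserving
      (continuous_fourier (integrable_comp_ofLp hu)).aestronglyMeasurable
      (WithLp.volume_preserving_toLp ℝ ℝ),
    eLpNorm_fourier_eq (integrable_comp_ofLp hu) (memLp_comp_ofLp hu₂),
    eLpNorm_comp_measurePreserving hu₂.1 (WithLp.volume_preserving_ofLp ℝ ℝ)]

lemma enorm_fderiv_comp_ofLp_le (u : ℝ × ℝ → ℂ) (x : WithLp 2 (ℝ × ℝ)) :
    ‖fderiv ℝ (u ∘ WithLp.ofLp) x‖ₑ ≤ ‖fderiv ℝ u (WithLp.ofLp x)‖ₑ := by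
  let e := WithLp.prodContinuousLinearEquiv 2 ℝ ℝ ℝ
  have he : ‖(e : WithLp 2 (ℝ × ℝ) →L[ℝ] ℝ × ℝ)‖ ≤ 1 := by
    simpa using ContinuousLinearMap.opNorm_le_of_lipschitz
      (f := (e : WithLp 2 (ℝ × ℝ) →L[ℝ] ℝ × ℝ)) (WithLp.prod_lipschitzWith_ofLp 2 ℝ ℝ)
  rw [show u ∘ WithLp.ofLp = u ∘ e from rfl, e.comp_right_fderiv, enorm_le_iff_norm_le]
  exact (ContinuousLinearMap.opNorm_comp_le _ _).trans (mul_le_of_le_one_right (norm_nonneg _) he)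

theorem lintegral_one_add_en_sq_mul_FT_le {u : ℝ × ℝ → ℂ} (hu : ContDiff ℝ 1 u)
    (hc : HasCompactSupport u) :
    ∫⁻ ξ, ENNReal.ofReal (1 + en ξ ^ 2) * ‖FT u ξ‖ₑ ^ 2 ≤
      (∫⁻ x, ‖u x‖ₑ ^ 2) + 2 * ∫⁻ x, ‖fderiv ℝ u x‖ₑ ^ 2 := by
  let e := WithLp.prodContinuousLinearEquiv 2 ℝ ℝ ℝ
  have hue : ContDiff ℝ 1 (u ∘ e) := hu.comp e.contDiff
  have hce : HasCompactSupport (u ∘ e) := hc.comp_homeomorph e.toHomeomorph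
  have hcont' : Continuous (fderiv ℝ (u ∘ e)) := hue.continuous_fderiv one_ne_zero
  have hrank : Module.finrank ℝ (WithLp 2 (ℝ × ℝ)) = 2 := by simp [e.toLinearEquiv.finrank_eq]
  have hsobolev := lintegral_one_add_norm_sq_mul_fourier_le
    (hue.continuous.integrable_of_hasCompactSupport hce)
    (hue.continuous.memLp_of_hasCompactSupport hce) (hue.differentiable one_ne_zero)
    (hcont'.integrable_of_hasCompactSupport (hce.fderiv ℝ))
    (hcont'.memLp_of_hasCompactSupport (hce.fderiv ℝ))
  calc ∫⁻ ξ, ENNReal.ofReal (1 + en ξ ^ 2) * ‖FT u ξ‖ₑ ^ 2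
      = ∫⁻ ξ, ENNReal.ofReal (1 + ‖ξ‖ ^ 2) * ‖FourierTransform.fourier (u ∘ e) ξ‖ₑ ^ 2 := by
        rw [← lintegral_comp_ofLp]
        simp only [en_eq_norm_toLp, FT_eq_fourier]
        rfl
    _ ≤ (∫⁻ x, ‖(u ∘ e) x‖ₑ ^ 2) + 2 * ∫⁻ x, ‖fderiv ℝ (u ∘ e) x‖ₑ ^ 2 := by
        simpa only [hrank, Nat.cast_ofNat] using hsobolev
    _ ≤ (∫⁻ x, ‖u x‖ₑ ^ 2) + 2 * ∫⁻ x, ‖fderiv ℝ u x‖ₑ ^ 2 := by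
        rw [← lintegral_comp_ofLp fun x => ‖u x‖ₑ ^ 2,
          ← lintegral_comp_ofLp fun x => ‖fderiv ℝ u x‖ₑ ^ 2]
        gcongr with x
        · rfl
        · exact enorm_fderiv_comp_ofLp_le u x

theorem exists_subseq_tendsto_FT {u : ℕ → ℝ × ℝ → ℂ} {s : Set (ℝ × ℝ)}
    (hs : Bornology.IsBounded s) (hus : ∀ n, support (u n) ⊆ s) (hu : ∀ n, Integrable (u n))
    {M : ℝ≥0} (hM : ∀ n, ∫ x, ‖u n x‖ ≤ M) :
    ∃ φ : ℕ → ℕ, StrictMono φ ∧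
      ∃ g : ℝ × ℝ → ℂ, ∀ ξ, Tendsto (fun n => FT (u (φ n)) ξ) atTop (𝓝 (g ξ)) := by
  obtain ⟨φ, hφ, g, hg⟩ := exists_subseq_tendsto_fourier
    (f := fun n => u n ∘ WithLp.ofLp (p := 2)) (s := WithLp.ofLp ⁻¹' s) (M := M)
    ((WithLp.prod_antilipschitzWith_ofLp 2 ℝ ℝ).isBounded_preimage hs)
    (fun n => preimage_mono (hus n)) (fun n => integrable_comp_ofLp (hu n))
    fun n => (integral_comp_ofLp fun x => ‖u n x‖).trans_le (hM n)
  refine ⟨φ, hφ, g ∘ WithLp.toLp 2, fun ξ => ?_⟩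
  simpa only [FT_eq_fourier, comp_apply] using hg (WithLp.toLp 2 ξ)

end Plane

section DyadicPiece

/-- The dyadic cut-off `ψ_{Θ,n,+} + ψ_{Θ,n,-}`, which does not depend on the polarization. -/
def dyadicPiece (χ : ℝ → ℝ) : ℕ → ℝ × ℝ → ℝ
  | 0, ξ => χ (en ξ)
  | n + 1, ξ => χ (en ξ / 2 ^ (n + 1)) - χ (en ξ / 2 ^ n)

lemma sum_range_dyadicPiece (χ : ℝ → ℝ) (N : ℕ) (ξ : ℝ × ℝ) :
    ∑ n ∈ Finset.range (N + 1), dyadicPiece χ n ξ = χ (en ξ / 2 ^ N) := by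
  rw [Finset.sum_range_succ']
  simp only [dyadicPiece, Finset.sum_range_sub (fun n => χ (en ξ / 2 ^ n)), pow_zero, div_one,
    sub_add_cancel]

variable {χ : ℝ → ℝ} {n : ℕ} {ξ : ℝ × ℝ}

lemma ChiOK.abs_dyadicPiece_le_one (hχ : ChiOK χ) (n : ℕ) (ξ : ℝ × ℝ) :
    |dyadicPiece χ n ξ| ≤ 1 := by
  obtain ⟨-, -, -, hmem⟩ := hχ
  rw [abs_le]
  cases n with
  | zero => exact ⟨neg_one_lt_zero.le.trans (hmem _).1, (hmem _).2⟩
  | succ n =>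
    have h₁ := hmem (en ξ / 2 ^ (n + 1))
    have h₂ := hmem (en ξ / 2 ^ n)
    constructor <;> simp only [dyadicPiece] <;> linarith [h₁.1, h₁.2, h₂.1, h₂.2]

lemma ChiOK.en_lt_of_dyadicPiece_ne_zero (hχ : ChiOK χ) (h : dyadicPiece χ n ξ ≠ 0) :
    en ξ < 2 ^ (n + 1) := by
  contrapose! h
  obtain ⟨-, -, hzero, -⟩ := hχ
  cases n with
  | zero => exact hzero _ (by simpa using h)
  | succ n =>
    have h₁ : 2 ≤ en ξ / 2 ^ (n + 1) := by rwa [le_div_iff₀ (by positivity), ← pow_succ']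
    have h₂ : 2 ≤ en ξ / 2 ^ n := h₁.trans
      (div_le_div_of_nonneg_left (en_nonneg ξ) (by positivity) (by gcongr <;> simp))
    rw [dyadicPiece, hzero _ h₁, hzero _ h₂, sub_self]

lemma ChiOK.lt_en_of_dyadicPiece_succ_ne_zero (hχ : ChiOK χ)
    (h : dyadicPiece χ (n + 1) ξ ≠ 0) : 2 ^ n < en ξ := by
  contrapose! h
  obtain ⟨-, hone, -, -⟩ := hχ
  have h₂ : en ξ / 2 ^ n ≤ 1 := (div_le_one (by positivity)).2 h
  have h₁ : en ξ / 2 ^ (n + 1) ≤ 1 :=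
    (div_le_one (by positivity)).2 (h.trans (by gcongr <;> simp))
  rw [dyadicPiece, hone _ h₁, hone _ h₂, sub_self]

lemma ChiOK.le_succ_of_dyadicPiece_ne_zero (hχ : ChiOK χ) {m : ℕ} (hn : dyadicPiece χ n ξ ≠ 0)
    (hm : dyadicPiece χ m ξ ≠ 0) : m ≤ n + 1 := by
  cases m with
  | zero => exact Nat.zero_le _
  | succ m =>
    have h := (hχ.lt_en_of_dyadicPiece_succ_ne_zero hm).trans (hχ.en_lt_of_dyadicPiece_ne_zero hn)
    exact (pow_lt_pow_iff_right₀ one_lt_two).1 h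

lemma ChiOK.tsum_le_two_mul (hχ : ChiOK χ) {f : ℕ → ℝ≥0∞} {B : ℝ≥0∞}
    (hf : ∀ n, dyadicPiece χ n ξ = 0 → f n = 0) (hB : ∀ n, f n ≤ B) : ∑' n, f n ≤ 2 * B := by
  classical
  by_cases h : ∃ n, dyadicPiece χ n ξ ≠ 0
  · have hsupp : ∀ n ∉ ({Nat.find h, Nat.find h + 1} : Finset ℕ), f n = 0 := by
      intro n hn
      refine hf n (not_not.1 fun hne => hn ?_)
      have h₁ := Nat.find_min' h hne
      have h₂ := hχ.le_succ_of_dyadicPiece_ne_zero (Nat.find_spec h) hne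
      simp only [Finset.mem_insert, Finset.mem_singleton]
      omega
    rw [tsum_eq_sum hsupp, Finset.sum_pair (Nat.lt_succ_self _).ne, two_mul]
    exact add_le_add (hB _) (hB _)
  · push Not at h
    simp [fun n => hf n (h n)]

/- The pieces sum to `1` and at most two of them do not vanish, so they are not all small. -/
lemma ChiOK.exists_quarter_lt_dyadicPiece (hχ : ChiOK χ) (ξ : ℝ × ℝ) :
    ∃ n, 1 / 4 < dyadicPiece χ n ξ := by
  by_contra! hsmall
  obtain ⟨N, hN⟩ := pow_unbounded_of_one_lt (en ξ) one_lt_two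
  have hsum : ∑ n ∈ Finset.range (N + 1), dyadicPiece χ n ξ = 1 := by
    rw [sum_range_dyadicPiece]
    exact hχ.2.1 _ ((div_le_one (by positivity)).2 hN.le)
  have hle : (1 : ℝ≥0∞) ≤ 2 * ENNReal.ofReal (1 / 4) :=
    calc (1 : ℝ≥0∞) = ENNReal.ofReal (∑ n ∈ Finset.range (N + 1), dyadicPiece χ n ξ) := by
          rw [hsum, ENNReal.ofReal_one]
      _ ≤ ∑ n ∈ Finset.range (N + 1), ENNReal.ofReal (dyadicPiece χ n ξ) :=
          Finset.le_sum_of_subadditive _ ENNReal.ofReal_zero.le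
            (fun _ _ => ENNReal.ofReal_add_le) _ _
      _ ≤ ∑' n, ENNReal.ofReal (dyadicPiece χ n ξ) := ENNReal.sum_le_tsum _
      _ ≤ 2 * ENNReal.ofReal (1 / 4) := hχ.tsum_le_two_mul (ξ := ξ) (fun n hn => by simp [hn])
          fun n => ENNReal.ofReal_le_ofReal (hsmall n)
  rw [← ENNReal.ofReal_one, ← ENNReal.ofReal_ofNat, ← ENNReal.ofReal_mul zero_le_two,
    ENNReal.ofReal_le_ofReal_iff (by norm_num)] at hle
  norm_num at hle

lemma ChiOK.one_add_en_sq_le (hχ : ChiOK χ) (h : dyadicPiece χ n ξ ≠ 0) :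
    1 + en ξ ^ 2 ≤ 5 * 4 ^ n := by
  have hlt : en ξ ^ 2 < (2 ^ (n + 1)) ^ 2 :=
    pow_lt_pow_left₀ (hχ.en_lt_of_dyadicPiece_ne_zero h) (en_nonneg ξ) two_ne_zero
  have hpow : ((2 : ℝ) ^ (n + 1)) ^ 2 = 4 * 4 ^ n := by
    rw [← pow_mul, mul_comm, pow_mul, pow_succ']
    norm_num
  linarith [one_le_pow₀ (n := n) (by norm_num : (1 : ℝ) ≤ 4)]

lemma ChiOK.four_pow_le (hχ : ChiOK χ) (h : dyadicPiece χ n ξ ≠ 0) :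
    4 ^ n ≤ 5 * (1 + en ξ ^ 2) := by
  cases n with
  | zero => nlinarith [sq_nonneg (en ξ)]
  | succ n =>
    have hlt : ((2 : ℝ) ^ n) ^ 2 < en ξ ^ 2 :=
      pow_lt_pow_left₀ (hχ.lt_en_of_dyadicPiece_succ_ne_zero h) (by positivity) two_ne_zero
    have hpow : ((2 : ℝ) ^ n) ^ 2 = 4 ^ n := by
      rw [← pow_mul, mul_comm, pow_mul]
      norm_num
    rw [pow_succ]
    linarith [sq_nonneg (en ξ)]

end DyadicPiece

section Weight

lemma rpow_le_rpow_abs_mul_rpow {a b c : ℝ} (ha : 0 < a) (hb : 0 < b) (hab : a ≤ c * b)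
    (hba : b ≤ c * a) (s : ℝ) : a ^ s ≤ c ^ |s| * b ^ s := by
  have hc : 0 < c := pos_of_mul_pos_left (ha.trans_le hab) hb.le
  rcases le_total 0 s with hs | hs
  · rw [abs_of_nonneg hs, ← mul_rpow hc.le hb.le]
    gcongr
  · rw [abs_of_nonpos hs, rpow_neg hc.le, ← inv_rpow hc.le, ← mul_rpow (by positivity) hb.le]
    exact rpow_le_rpow_of_nonpos (by positivity) ((inv_mul_le_iff₀ hc).2 hba) hs

lemma two_rpow_two_mul_mul (s : ℝ) (n : ℕ) : (2 : ℝ) ^ (2 * s * n) = ((4 : ℝ) ^ n) ^ s := by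
  rw [← rpow_natCast, ← rpow_mul (by norm_num), show (4 : ℝ) = 2 ^ (2 : ℝ) by norm_num,
    ← rpow_mul (by norm_num)]
  ring_nf

variable {χ : ℝ → ℝ} {Θ Θ' : Polarization} {p q : ℝ} {n : ℕ} {ξ : ℝ × ℝ}

lemma ChiOK.two_rpow_le (hχ : ChiOK χ) (h : dyadicPiece χ n ξ ≠ 0) (s : ℝ) :
    (2 : ℝ) ^ (2 * s * n) ≤ 5 ^ |s| * (1 + en ξ ^ 2) ^ s := by
  rw [two_rpow_two_mul_mul]
  exact rpow_le_rpow_abs_mul_rpow (by positivity) (by positivity) (hχ.four_pow_le h)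
    (hχ.one_add_en_sq_le h) s

lemma ChiOK.one_add_en_sq_rpow_le (hχ : ChiOK χ) (h : dyadicPiece χ n ξ ≠ 0) (s : ℝ) :
    (1 + en ξ ^ 2) ^ s ≤ 5 ^ |s| * 2 ^ (2 * s * n) := by
  rw [two_rpow_two_mul_mul]
  exact rpow_le_rpow_abs_mul_rpow (by positivity) (by positivity) (hχ.one_add_en_sq_le h)
    (hχ.four_pow_le h) s

lemma psiLP_zero (χ : ℝ → ℝ) (Θ : Polarization) (σ : Bool) (ξ : ℝ × ℝ) :
    psiLP χ Θ 0 σ ξ = dyadicPiece χ 0 ξ / 2 := rfl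

lemma psiLP_succ (χ : ℝ → ℝ) (Θ : Polarization) (n : ℕ) (σ : Bool) (ξ : ℝ × ℝ) :
    psiLP χ Θ (n + 1) σ ξ =
      (if σ then Θ.phip ξ else 1 - Θ.phip ξ) * dyadicPiece χ (n + 1) ξ := by
  have h₁ : (2 : ℝ) ^ (-((n + 1 : ℕ) : ℤ)) * en ξ = en ξ / 2 ^ (n + 1) := by
    rw [zpow_neg, zpow_natCast, mul_comm, div_eq_mul_inv]
  have h₂ : (2 : ℝ) ^ (-((n + 1 : ℕ) : ℤ) + 1) * en ξ = en ξ / 2 ^ n := by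
    rw [Nat.cast_succ, neg_add_rev, neg_add_cancel_comm, zpow_neg, zpow_natCast, mul_comm,
      div_eq_mul_inv]
  rw [psiLP, if_neg n.succ_ne_zero, Θ.phim_def, h₁, h₂, dyadicPiece]

lemma exists_psiLP_eq (χ : ℝ → ℝ) (Θ : Polarization) (n : ℕ) (ξ : ℝ × ℝ) :
    ∃ t ∈ Icc (0 : ℝ) 1, psiLP χ Θ n true ξ = t * dyadicPiece χ n ξ ∧
      psiLP χ Θ n false ξ = (1 - t) * dyadicPiece χ n ξ := by
  cases n with
  | zero => exact ⟨1 / 2, by norm_num, by rw [psiLP_zero]; ring, by rw [psiLP_zero]; ring⟩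
  | succ n => exact ⟨Θ.phip ξ, Θ.mem_Icc_p ξ, psiLP_succ χ Θ n true ξ, psiLP_succ χ Θ n false ξ⟩

/-- The contribution of frequency level `n` to `anisotropicWeight`. -/
def levelWeight (χ : ℝ → ℝ) (Θ : Polarization) (p q : ℝ) (n : ℕ) (ξ : ℝ × ℝ) : ℝ :=
  2 ^ (2 * p * n) * psiLP χ Θ n true ξ ^ 2 + 2 ^ (2 * q * n) * psiLP χ Θ n false ξ ^ 2

/-- The Fourier weight of the norm `‖·‖_{Θ,p,q}`: see `ChiOK.anorm_sq`. -/
def anisotropicWeight (χ : ℝ → ℝ) (Θ : Polarization) (p q : ℝ) (ξ : ℝ × ℝ) : ℝ≥0∞ :=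
  ∑' n : ℕ, ENNReal.ofReal (levelWeight χ Θ p q n ξ)

lemma levelWeight_nonneg : 0 ≤ levelWeight χ Θ p q n ξ := by unfold levelWeight; positivity

lemma levelWeight_le (hqp : q ≤ p) :
    levelWeight χ Θ p q n ξ ≤ 2 ^ (2 * p * n) * dyadicPiece χ n ξ ^ 2 := by
  obtain ⟨t, ⟨ht₀, ht₁⟩, htrue, hfalse⟩ := exists_psiLP_eq χ Θ n ξ
  calc levelWeight χ Θ p q n ξ
      ≤ 2 ^ (2 * p * n) * psiLP χ Θ n true ξ ^ 2 + 2 ^ (2 * p * n) * psiLP χ Θ n false ξ ^ 2 := by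
        unfold levelWeight
        gcongr
        norm_num
    _ = 2 ^ (2 * p * n) * dyadicPiece χ n ξ ^ 2 * (t ^ 2 + (1 - t) ^ 2) := by
        rw [htrue, hfalse]; ring
    _ ≤ 2 ^ (2 * p * n) * dyadicPiece χ n ξ ^ 2 :=
        mul_le_of_le_one_right (by positivity) (by nlinarith)

lemma le_two_mul_levelWeight (hqp : q ≤ p) :
    2 ^ (2 * q * n) * dyadicPiece χ n ξ ^ 2 ≤ 2 * levelWeight χ Θ p q n ξ := by
  obtain ⟨t, -, htrue, hfalse⟩ := exists_psiLP_eq χ Θ n ξ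
  calc 2 ^ (2 * q * n) * dyadicPiece χ n ξ ^ 2
      ≤ 2 ^ (2 * q * n) * dyadicPiece χ n ξ ^ 2 * (2 * (t ^ 2 + (1 - t) ^ 2)) :=
        le_mul_of_one_le_right (by positivity) (by nlinarith [sq_nonneg (2 * t - 1)])
    _ = 2 * (2 ^ (2 * q * n) * psiLP χ Θ n true ξ ^ 2 +
          2 ^ (2 * q * n) * psiLP χ Θ n false ξ ^ 2) := by
        rw [htrue, hfalse]; ring
    _ ≤ 2 * levelWeight χ Θ p q n ξ := by
        unfold levelWeight
        gcongr
        norm_num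

/- On `C₊` the weight of `Θ` only has the stronger exponent `p`; off `C₊`, which is inside `C'₋`,
the weight of `Θ'` only has the weaker exponent `q`. -/
lemma ChiOK.levelWeight_le_of_polLt (hχ : ChiOK χ) (hΘ : PolLt Θ' Θ) (hqp : q ≤ p) (n : ℕ)
    (ξ : ℝ × ℝ) : levelWeight χ Θ' p q n ξ ≤ 2 * levelWeight χ Θ p q n ξ := by
  have hnonneg : 0 ≤ levelWeight χ Θ p q n ξ := levelWeight_nonneg
  cases n with
  | zero =>
    have hzero : levelWeight χ Θ' p q 0 ξ = levelWeight χ Θ p q 0 ξ := rfl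
    linarith
  | succ n =>
    by_cases hn : dyadicPiece χ (n + 1) ξ = 0
    · have hle := levelWeight_le (χ := χ) (Θ := Θ') (n := n + 1) (ξ := ξ) hqp
      simp only [hn, ne_eq, OfNat.ofNat_ne_zero, not_false_eq_true, zero_pow, mul_zero] at hle
      linarith
    have hξ : ξ ≠ 0 := by
      rintro rfl
      have h := hχ.lt_en_of_dyadicPiece_succ_ne_zero hn
      simp only [en, Prod.fst_zero, Prod.snd_zero, ne_eq, OfNat.ofNat_ne_zero, not_false_eq_true,
        zero_pow, add_zero, sqrt_zero] at h
      exact absurd h (by positivity : (0 : ℝ) < 2 ^ n).not_gt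
    by_cases hp : ξ ∈ Θ.Cp
    · have hΘp : levelWeight χ Θ p q (n + 1) ξ =
          2 ^ (2 * p * (n + 1 : ℕ)) * dyadicPiece χ (n + 1) ξ ^ 2 := by
        simp [levelWeight, psiLP_succ, Θ.one_on_p ξ hp hξ]
      have hle := levelWeight_le (χ := χ) (Θ := Θ') (n := n + 1) (ξ := ξ) hqp
      linarith
    · have hm : ξ ∈ Θ'.Cm := interior_subset (hΘ ⟨subset_closure ⟨mem_univ ξ, hp⟩, hξ⟩)
      have hΘ'q : levelWeight χ Θ' p q (n + 1) ξ =
          2 ^ (2 * q * (n + 1 : ℕ)) * dyadicPiece χ (n + 1) ξ ^ 2 := by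
        simp [levelWeight, psiLP_succ, Θ'.zero_on_m ξ hm hξ]
      rw [hΘ'q]
      exact le_two_mul_levelWeight hqp

theorem ChiOK.anisotropicWeight_le_of_polLt (hχ : ChiOK χ) (hΘ : PolLt Θ' Θ) (hqp : q ≤ p)
    (ξ : ℝ × ℝ) : anisotropicWeight χ Θ' p q ξ ≤ 2 * anisotropicWeight χ Θ p q ξ := by
  rw [anisotropicWeight, anisotropicWeight, ← ENNReal.tsum_mul_left]
  refine ENNReal.tsum_le_tsum fun n => ?_
  rw [← ENNReal.ofReal_ofNat, ← ENNReal.ofReal_mul zero_le_two]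
  exact ENNReal.ofReal_le_ofReal (hχ.levelWeight_le_of_polLt hΘ hqp n ξ)

theorem ChiOK.anisotropicWeight_le (hχ : ChiOK χ) (Θ : Polarization) (hqp : q ≤ p) (ξ : ℝ × ℝ) :
    anisotropicWeight χ Θ p q ξ ≤
      ENNReal.ofReal (2 * 5 ^ |p|) * ENNReal.ofReal ((1 + en ξ ^ 2) ^ p) := by
  rw [ENNReal.ofReal_mul zero_le_two, ENNReal.ofReal_ofNat, mul_assoc,
    ← ENNReal.ofReal_mul (by positivity)]
  refine hχ.tsum_le_two_mul (ξ := ξ) (fun n hn => ?_) fun n => ENNReal.ofReal_le_ofReal ?_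
  · refine ENNReal.ofReal_of_nonpos ((levelWeight_le hqp).trans_eq ?_)
    simp [hn]
  · refine (levelWeight_le hqp).trans ?_
    by_cases hn : dyadicPiece χ n ξ = 0
    · rw [hn, zero_pow two_ne_zero, mul_zero]
      positivity
    · refine (mul_le_of_le_one_right (by positivity) ?_).trans (hχ.two_rpow_le hn p)
      exact (sq_le_one_iff_abs_le_one _).2 (hχ.abs_dyadicPiece_le_one n ξ)

theorem ChiOK.le_anisotropicWeight (hχ : ChiOK χ) (Θ : Polarization) (hqp : q ≤ p)
    (ξ : ℝ × ℝ) :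
    ENNReal.ofReal ((1 + en ξ ^ 2) ^ q) ≤
      ENNReal.ofReal (32 * 5 ^ |q|) * anisotropicWeight χ Θ p q ξ := by
  obtain ⟨n, hn⟩ := hχ.exists_quarter_lt_dyadicPiece ξ
  have hlevel : (1 + en ξ ^ 2) ^ q ≤ 32 * 5 ^ |q| * levelWeight χ Θ p q n ξ :=
    calc (1 + en ξ ^ 2) ^ q
        ≤ 5 ^ |q| * 2 ^ (2 * q * n) := hχ.one_add_en_sq_rpow_le (by linarith) q
      _ ≤ 5 ^ |q| * 2 ^ (2 * q * n) * (16 * dyadicPiece χ n ξ ^ 2) :=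
          le_mul_of_one_le_right (by positivity) (by nlinarith)
      _ = 16 * 5 ^ |q| * (2 ^ (2 * q * n) * dyadicPiece χ n ξ ^ 2) := by ring
      _ ≤ 16 * 5 ^ |q| * (2 * levelWeight χ Θ p q n ξ) :=
          mul_le_mul_of_nonneg_left (le_two_mul_levelWeight hqp) (by positivity)
      _ = 32 * 5 ^ |q| * levelWeight χ Θ p q n ξ := by ring
  calc ENNReal.ofReal ((1 + en ξ ^ 2) ^ q)
      ≤ ENNReal.ofReal (32 * 5 ^ |q|) * ENNReal.ofReal (levelWeight χ Θ p q n ξ) := by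
        rw [← ENNReal.ofReal_mul (by positivity)]
        exact ENNReal.ofReal_le_ofReal hlevel
    _ ≤ ENNReal.ofReal (32 * 5 ^ |q|) * anisotropicWeight χ Θ p q ξ := by
        gcongr
        exact ENNReal.le_tsum n

theorem ChiOK.mul_anisotropicWeight_le (hχ : ChiOK χ) (Θ : Polarization) {p' q' s : ℝ}
    (hs : 0 ≤ s) (hp : p' + s ≤ p) (hq : q' + s ≤ q) (ξ : ℝ × ℝ) :
    ENNReal.ofReal ((1 + en ξ ^ 2) ^ s) * anisotropicWeight χ Θ p' q' ξ ≤
      ENNReal.ofReal (5 ^ s) * anisotropicWeight χ Θ p q ξ := by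
  rw [anisotropicWeight, anisotropicWeight, ← ENNReal.tsum_mul_left, ← ENNReal.tsum_mul_left]
  refine ENNReal.tsum_le_tsum fun n => ?_
  rw [← ENNReal.ofReal_mul (by positivity), ← ENNReal.ofReal_mul (by positivity)]
  refine ENNReal.ofReal_le_ofReal ?_
  by_cases hn : dyadicPiece χ n ξ = 0
  · obtain ⟨t, -, htrue, hfalse⟩ := exists_psiLP_eq χ Θ n ξ
    simp [levelWeight, htrue, hfalse, hn]
  have hshift {a b : ℝ} (hab : a + s ≤ b) :
      (2 : ℝ) ^ (2 * s * n) * 2 ^ (2 * a * n) ≤ 2 ^ (2 * b * n) := by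
    rw [← rpow_add two_pos]
    gcongr
    · norm_num
    · nlinarith [n.cast_nonneg (α := ℝ)]
  calc (1 + en ξ ^ 2) ^ s * levelWeight χ Θ p' q' n ξ
      ≤ 5 ^ s * 2 ^ (2 * s * n) * levelWeight χ Θ p' q' n ξ := by
        have h := hχ.one_add_en_sq_rpow_le hn s
        rw [abs_of_nonneg hs] at h
        exact mul_le_mul_of_nonneg_right h levelWeight_nonneg
    _ = 5 ^ s * (2 ^ (2 * s * n) * 2 ^ (2 * p' * n) * psiLP χ Θ n true ξ ^ 2 +
          2 ^ (2 * s * n) * 2 ^ (2 * q' * n) * psiLP χ Θ n false ξ ^ 2) := by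
        unfold levelWeight
        ring
    _ ≤ 5 ^ s * levelWeight χ Θ p q n ξ := by
        unfold levelWeight
        gcongr
        · exact hshift hp
        · exact hshift hq

end Weight

section Norm

lemma le_sqrt_mul_of_sq_le {a b : ℝ≥0∞} {C : ℝ≥0} (h : a ^ 2 ≤ C * b ^ 2) :
    a ≤ NNReal.sqrt C * b := by
  rwa [← ENNReal.pow_le_pow_left_iff two_ne_zero, mul_pow, ← ENNReal.coe_pow, NNReal.sq_sqrt]

lemma le_sqrt_mul_of_weight_le {α E : Type*} [MeasurableSpace α] {μ : Measure α}
    [NormedAddCommGroup E] {w w' : α → ℝ≥0∞} {f : α → E} {a b : ℝ≥0∞} {C : ℝ≥0}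
    (ha : a ^ 2 = ∫⁻ x, w x * ‖f x‖ₑ ^ 2 ∂μ) (hb : b ^ 2 = ∫⁻ x, w' x * ‖f x‖ₑ ^ 2 ∂μ)
    (hw : ∀ x, w x ≤ C * w' x) : a ≤ NNReal.sqrt C * b := by
  refine le_sqrt_mul_of_sq_le ?_
  rw [ha, hb, ← lintegral_const_mul' _ _ ENNReal.coe_ne_top]
  refine lintegral_mono fun x => ?_
  rw [← mul_assoc]
  gcongr
  exact hw x

lemma rpow_half_sq (x : ℝ≥0∞) : (x ^ (1 / 2 : ℝ)) ^ 2 = x := by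
  rw [← ENNReal.rpow_natCast, ← ENNReal.rpow_mul]
  norm_num

lemma enorm_ofReal_mul_sq (r : ℝ) (z : ℂ) :
    ‖(r : ℂ) * z‖ₑ ^ 2 = ENNReal.ofReal (r ^ 2) * ‖z‖ₑ ^ 2 := by
  rw [enorm_mul, mul_pow, ← ofReal_norm (r : ℂ), Complex.norm_real, norm_eq_abs,
    ← ENNReal.ofReal_pow (abs_nonneg r), sq_abs]

variable {χ : ℝ → ℝ} {Θ Θ' : Polarization} {p q : ℝ} {u : ℝ × ℝ → ℂ}

lemma wnorm_sq (s : ℝ) (u : ℝ × ℝ → ℂ) :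
    wnorm s u ^ 2 = ∫⁻ ξ, ENNReal.ofReal ((1 + en ξ ^ 2) ^ s) * ‖FT u ξ‖ₑ ^ 2 := by
  rw [wnorm, eLpNorm_two_sq]
  refine lintegral_congr fun ξ => ?_
  rw [enorm_ofReal_mul_sq, ← rpow_natCast, ← rpow_mul (by positivity)]
  norm_num

lemma ChiOK.measurable_psiLP (hχ : ChiOK χ) (Θ : Polarization) (n : ℕ) (σ : Bool) :
    Measurable (psiLP χ Θ n σ) := by
  have hχc : Continuous χ := hχ.1.continuous
  have hen : Continuous en := continuous_en
  have hphip : Measurable Θ.phip :=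
    measurable_of_continuousOn_compl_singleton 0 Θ.smooth_p.continuousOn
  have hpiece : Measurable (dyadicPiece χ n) := by
    cases n <;> unfold dyadicPiece <;> fun_prop
  cases n with
  | zero => simpa only [← psiLP_zero χ Θ σ] using hpiece.div_const 2
  | succ n =>
    have h : psiLP χ Θ (n + 1) σ = _ := funext (psiLP_succ χ Θ n σ)
    cases σ <;> rw [h] <;> simp only [Bool.false_eq_true, if_true, if_false] <;> fun_prop

lemma ChiOK.measurable_anisotropicWeight (hχ : ChiOK χ) (Θ : Polarization) (p q : ℝ) :
    Measurable (anisotropicWeight χ Θ p q) := by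
  have h := hχ.measurable_psiLP Θ
  unfold anisotropicWeight levelWeight
  fun_prop

lemma segNorm_sq (χ : ℝ → ℝ) (Θ : Polarization) (p : ℝ) (σ : Bool) (u : ℝ × ℝ → ℂ) :
    segNorm χ Θ p σ u ^ 2 =
      ∑' n : ℕ, ∫⁻ ξ, ENNReal.ofReal (2 ^ (2 * p * n) * psiLP χ Θ n σ ξ ^ 2) * ‖FT u ξ‖ₑ ^ 2 := by
  rw [segNorm, rpow_half_sq]
  refine tsum_congr fun n => ?_
  rw [eLpNorm_two_sq, ← lintegral_const_mul' _ _ ENNReal.ofReal_ne_top]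
  refine lintegral_congr fun ξ => ?_
  rw [enorm_ofReal_mul_sq, ENNReal.ofReal_mul (by positivity), ← mul_assoc]

theorem ChiOK.anorm_sq (hχ : ChiOK χ) (Θ : Polarization) (p q : ℝ) (hu : Integrable u) :
    anorm χ Θ p q u ^ 2 = ∫⁻ ξ, anisotropicWeight χ Θ p q ξ * ‖FT u ξ‖ₑ ^ 2 := by
  have hψ := hχ.measurable_psiLP Θ
  have hFT := (continuous_FT hu).measurable
  rw [anorm, rpow_half_sq, segNorm_sq, segNorm_sq, ← ENNReal.tsum_add]
  simp only [anisotropicWeight, ← ENNReal.tsum_mul_right]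
  rw [lintegral_tsum (by unfold levelWeight; fun_prop)]
  refine tsum_congr fun n => ?_
  rw [← lintegral_add_left (by fun_prop)]
  refine lintegral_congr fun ξ => ?_
  rw [← add_mul, ← ENNReal.ofReal_add (by positivity) (by positivity), levelWeight]

lemma eLpNorm_le_wnorm (hq : 0 ≤ q) (hu : Integrable u) (hu₂ : MemLp u 2) :
    eLpNorm u 2 volume ≤ wnorm q u := by
  rw [← eLpNorm_FT_eq hu hu₂, ← ENNReal.pow_le_pow_left_iff two_ne_zero, eLpNorm_two_sq, wnorm_sq]
  refine lintegral_mono fun ξ => le_mul_of_one_le_left' ?_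
  rw [ENNReal.one_le_ofReal]
  exact one_le_rpow (by linarith [sq_nonneg (en ξ)]) hq

theorem ChiOK.anorm_le_wnorm (hχ : ChiOK χ) (Θ : Polarization) (hqp : q ≤ p)
    (hu : Integrable u) :
    anorm χ Θ p q u ≤ NNReal.sqrt (Real.toNNReal (2 * 5 ^ |p|)) * wnorm p u :=
  le_sqrt_mul_of_weight_le (hχ.anorm_sq Θ p q hu) (wnorm_sq p u) (hχ.anisotropicWeight_le Θ hqp)

theorem ChiOK.wnorm_le_anorm (hχ : ChiOK χ) (Θ : Polarization) (hqp : q ≤ p)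
    (hu : Integrable u) :
    wnorm q u ≤ NNReal.sqrt (Real.toNNReal (32 * 5 ^ |q|)) * anorm χ Θ p q u :=
  le_sqrt_mul_of_weight_le (wnorm_sq q u) (hχ.anorm_sq Θ p q hu) (hχ.le_anisotropicWeight Θ hqp)

theorem ChiOK.anorm_le_of_polLt (hχ : ChiOK χ) (hΘ : PolLt Θ' Θ) (hqp : q ≤ p)
    (hu : Integrable u) : anorm χ Θ' p q u ≤ NNReal.sqrt 2 * anorm χ Θ p q u :=
  le_sqrt_mul_of_weight_le (hχ.anorm_sq Θ' p q hu) (hχ.anorm_sq Θ p q hu)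
    (hχ.anisotropicWeight_le_of_polLt hΘ hqp)

theorem exists_wnorm_one_le {K : Set (ℝ × ℝ)} (hK : Bornology.IsBounded K) :
    ∃ C : ℝ≥0, ∀ u : ℝ × ℝ → ℂ, ContDiff ℝ 1 u → support u ⊆ K →
      wnorm 1 u ≤ C * ENNReal.ofReal (⨆ x, (‖u x‖ + ‖fderiv ℝ u x‖)) := by
  have hvol : volume (closure K) ≠ ∞ := hK.isCompact_closure.measure_lt_top.ne
  refine ⟨NNReal.sqrt (3 * (volume (closure K)).toNNReal), fun u hu hs => le_sqrt_mul_of_sq_le ?_⟩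
  have hts : tsupport u ⊆ closure K := closure_mono hs
  have hc : HasCompactSupport u := hK.isCompact_closure.of_isClosed_subset isClosed_closure hts
  have hbdd : BddAbove (range fun x => ‖u x‖ + ‖fderiv ℝ u x‖) := by
    have hcont := hu.continuous
    exact Continuous.bddAbove_range_of_hasCompactSupport (by fun_prop)
      (hc.norm.add (hc.fderiv ℝ).norm)
  set S : ℝ := ⨆ x, (‖u x‖ + ‖fderiv ℝ u x‖)
  have hle (x : ℝ × ℝ) : ‖u x‖ + ‖fderiv ℝ u x‖ ≤ S := le_ciSup hbdd x
  have hu_le (x : ℝ × ℝ) : ‖u x‖ₑ ≤ ENNReal.ofReal S := by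
    rw [← ofReal_norm]
    exact ENNReal.ofReal_le_ofReal (by linarith [hle x, norm_nonneg (fderiv ℝ u x)])
  have hu'_le (x : ℝ × ℝ) : ‖fderiv ℝ u x‖ₑ ≤ ENNReal.ofReal S := by
    rw [← ofReal_norm]
    exact ENNReal.ofReal_le_ofReal (by linarith [hle x, norm_nonneg (u x)])
  calc wnorm 1 u ^ 2 = ∫⁻ ξ, ENNReal.ofReal (1 + en ξ ^ 2) * ‖FT u ξ‖ₑ ^ 2 := by
        simp only [wnorm_sq, rpow_one]
    _ ≤ (∫⁻ x, ‖u x‖ₑ ^ 2) + 2 * ∫⁻ x, ‖fderiv ℝ u x‖ₑ ^ 2 :=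
        lintegral_one_add_en_sq_mul_FT_le hu hc
    _ ≤ ENNReal.ofReal S ^ 2 * volume (closure K) +
          2 * (ENNReal.ofReal S ^ 2 * volume (closure K)) := by
        gcongr
        · exact lintegral_enorm_sq_le_of_support_subset (hs.trans subset_closure) hu_le
        · exact lintegral_enorm_sq_le_of_support_subset
            ((support_fderiv_subset ℝ).trans hts) hu'_le
    _ = (3 * (volume (closure K)).toNNReal : ℝ≥0) * ENNReal.ofReal S ^ 2 := by
        rw [ENNReal.coe_mul, ENNReal.coe_toNNReal hvol, ENNReal.coe_ofNat]
        ring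

end Norm

section Compactness

section WeightedConvergence

variable {α E : Type*} [MeasurableSpace α] {μ : Measure α} [NormedAddCommGroup E]
  {f : ℕ → α → E} {g : α → E} {w w' : α → ℝ≥0∞} {A B : ℝ≥0∞}

lemma tendsto_lintegral_mul_enorm_sub_sq (hw : AEMeasurable w μ) (hwμ : ∫⁻ x, w x ∂μ ≠ ∞)
    (hf : ∀ n, AEStronglyMeasurable (f n) μ) (hB : B ≠ ∞) (hfB : ∀ n x, ‖f n x‖ₑ ≤ B)
    (hfg : ∀ x, Tendsto (fun n => f n x) atTop (𝓝 (g x))) :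
    Tendsto (fun mn : ℕ × ℕ => ∫⁻ x, w x * ‖f mn.1 x - f mn.2 x‖ₑ ^ 2 ∂μ) atTop (𝓝 0) := by
  have hw_ae : ∀ᵐ x ∂μ, w x ≠ ∞ := (ae_lt_top' hw hwμ).mono fun x hx => hx.ne
  rw [← lintegral_zero (μ := μ)]
  refine tendsto_lintegral_filter_of_dominated_convergence'
    (fun x => w x * (2 * (B ^ 2 + B ^ 2))) (.of_forall fun mn => ?_)
    (.of_forall fun mn => ae_of_all _ fun x => ?_) ?_ (hw_ae.mono fun x hx => ?_)
  · exact hw.mul (((hf _).sub (hf _)).enorm.pow_const 2)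
  · refine mul_le_mul_right ((enorm_sub_sq_le _ _).trans ?_) _
    gcongr <;> exact hfB _ x
  · have hB' : 2 * (B ^ 2 + B ^ 2) ≠ ∞ := by finiteness
    rw [lintegral_mul_const' _ _ hB']
    exact ENNReal.mul_ne_top hwμ hB'
  · have hsub : Tendsto (fun mn : ℕ × ℕ => f mn.1 x - f mn.2 x) atTop (𝓝 0) := by
      rw [← sub_self (g x), ← prod_atTop_atTop_eq]
      exact ((hfg x).comp tendsto_fst).sub ((hfg x).comp tendsto_snd)
    have hsq := (ENNReal.continuous_pow 2).tendsto 0 |>.comp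
      (by simpa using hsub.enorm)
    simpa using ENNReal.Tendsto.const_mul hsq (Or.inr hx)

theorem tendsto_lintegral_mul_enorm_sub_sq_of_weight_le [TopologicalSpace α] [T2Space α]
    [OpensMeasurableSpace α] (hw' : AEMeasurable w' μ)
    (hw'_int : ∀ D, IsCompact D → ∫⁻ x in D, w' x ∂μ ≠ ∞)
    (hww' : ∀ c ≠ 0, ∀ᶠ x in cocompact α, w' x ≤ c * w x)
    (hw : AEMeasurable w μ) (hf : ∀ n, AEStronglyMeasurable (f n) μ)
    (hB : B ≠ ∞) (hfB : ∀ n x, ‖f n x‖ₑ ≤ B)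
    (hfg : ∀ x, Tendsto (fun n => f n x) atTop (𝓝 (g x)))
    (hA : A ≠ ∞) (hfA : ∀ n, ∫⁻ x, w x * ‖f n x‖ₑ ^ 2 ∂μ ≤ A) :
    Tendsto (fun mn : ℕ × ℕ => ∫⁻ x, w' x * ‖f mn.1 x - f mn.2 x‖ₑ ^ 2 ∂μ) atTop (𝓝 0) := by
  rw [ENNReal.tendsto_nhds_zero]
  intro ε hε
  set c : ℝ≥0∞ := ε / 2 / (2 * (A + A))
  have hc₀ : c ≠ 0 := ENNReal.div_ne_zero.2 ⟨(ENNReal.half_pos hε.ne').ne', by finiteness⟩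
  obtain ⟨D, hD, hDc⟩ := mem_cocompact.1 (hww' c hc₀)
  have hlow := tendsto_lintegral_mul_enorm_sub_sq hw'.restrict (hw'_int D hD)
    (fun n => (hf n).restrict) hB hfB hfg
  have hhigh (m n : ℕ) : ∫⁻ x in Dᶜ, w' x * ‖f m x - f n x‖ₑ ^ 2 ∂μ ≤ ε / 2 :=
    calc ∫⁻ x in Dᶜ, w' x * ‖f m x - f n x‖ₑ ^ 2 ∂μ
        ≤ ∫⁻ x in Dᶜ, c * (2 * (w x * ‖f m x‖ₑ ^ 2 + w x * ‖f n x‖ₑ ^ 2)) ∂μ :=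
          setLIntegral_mono' hD.measurableSet.compl fun x hx =>
            (mul_le_mul' (hDc hx) (enorm_sub_sq_le _ _)).trans_eq (by ring)
      _ ≤ ∫⁻ x, c * (2 * (w x * ‖f m x‖ₑ ^ 2 + w x * ‖f n x‖ₑ ^ 2)) ∂μ :=
          setLIntegral_le_lintegral _ _
      _ = c * (2 * ((∫⁻ x, w x * ‖f m x‖ₑ ^ 2 ∂μ) + ∫⁻ x, w x * ‖f n x‖ₑ ^ 2 ∂μ)) := by
          have hmeas (n : ℕ) : AEMeasurable (fun x => w x * ‖f n x‖ₑ ^ 2) μ :=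
            hw.mul ((hf n).enorm.pow_const 2)
          have hsum : AEMeasurable (fun x => w x * ‖f m x‖ₑ ^ 2 + w x * ‖f n x‖ₑ ^ 2) μ :=
            (hmeas m).add (hmeas n)
          rw [lintegral_const_mul'' _ (hsum.const_mul 2), lintegral_const_mul'' _ hsum,
            lintegral_add_left' (hmeas m)]
      _ ≤ c * (2 * (A + A)) := by gcongr <;> exact hfA _
      _ ≤ ε / 2 := (mul_comm _ _).trans_le ENNReal.mul_div_le
  filter_upwards [ENNReal.tendsto_nhds_zero.1 hlow (ε / 2) (ENNReal.half_pos hε.ne')] with mn hmn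
  rw [← lintegral_add_compl _ hD.measurableSet, ← ENNReal.add_halves ε]
  exact add_le_add hmn (hhigh mn.1 mn.2)

end WeightedConvergence

variable {χ : ℝ → ℝ} {p q p' q' : ℝ}

lemma ChiOK.setLIntegral_anisotropicWeight_ne_top (hχ : ChiOK χ) (Θ : Polarization)
    (hqp : q ≤ p) {D : Set (ℝ × ℝ)} (hD : IsCompact D) :
    ∫⁻ ξ in D, anisotropicWeight χ Θ p q ξ ≠ ∞ := by
  have hcont : Continuous fun ξ => (1 + en ξ ^ 2) ^ p :=
    (continuous_const.add (continuous_en.pow 2)).rpow_const fun ξ =>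
      Or.inl (add_pos_of_pos_of_nonneg one_pos (sq_nonneg (en ξ))).ne'
  have hfin : ∫⁻ ξ in D, ENNReal.ofReal ((1 + en ξ ^ 2) ^ p) < ∞ :=
    (hcont.continuousOn.integrableOn_compact hD).lintegral_lt_top
  have hle := (lintegral_mono (hχ.anisotropicWeight_le Θ hqp)).trans_eq
    (lintegral_const_mul' (μ := volume.restrict D) _ _ ENNReal.coe_ne_top)
  exact ne_top_of_le_ne_top (ENNReal.mul_ne_top ENNReal.coe_ne_top hfin.ne) hle

lemma tendsto_one_add_en_sq_cocompact :
    Tendsto (fun ξ => 1 + en ξ ^ 2) (cocompact (ℝ × ℝ)) atTop := by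
  have hen : Tendsto en (cocompact (ℝ × ℝ)) atTop := by
    refine tendsto_atTop_mono (fun ξ => ?_) (tendsto_norm_cocompact_atTop (E := ℝ × ℝ))
    rw [en_eq_norm_toLp]
    simpa using (WithLp.prod_lipschitzWith_ofLp 2 ℝ ℝ).norm_sub_le (WithLp.toLp 2 ξ) 0
  exact tendsto_atTop_add_const_left _ 1 ((tendsto_pow_atTop two_ne_zero).comp hen)

theorem ChiOK.eventually_cocompact_anisotropicWeight_le (hχ : ChiOK χ) (Θ : Polarization)
    (hp : p' < p) (hq : q' < q) {c : ℝ≥0∞} (hc : c ≠ 0) :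
    ∀ᶠ ξ in cocompact (ℝ × ℝ),
      anisotropicWeight χ Θ p' q' ξ ≤ c * anisotropicWeight χ Θ p q ξ := by
  set s := min (p - p') (q - q')
  have hs₀ : 0 < s := lt_min (sub_pos.2 hp) (sub_pos.2 hq)
  have hps : p' + s ≤ p := by linarith [min_le_left (p - p') (q - q')]
  have hqs : q' + s ≤ q := by linarith [min_le_right (p - p') (q - q')]
  have hlim : Tendsto (fun ξ => ENNReal.ofReal ((1 + en ξ ^ 2) ^ (-s) * 5 ^ s))
      (cocompact (ℝ × ℝ)) (𝓝 0) := by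
    simpa using ENNReal.tendsto_ofReal
      (((tendsto_rpow_neg_atTop hs₀).comp tendsto_one_add_en_sq_cocompact).mul_const (5 ^ s))
  filter_upwards [ENNReal.tendsto_nhds_zero.1 hlim c hc.bot_lt] with ξ hξ
  have hpos : 0 < 1 + en ξ ^ 2 := by positivity
  calc anisotropicWeight χ Θ p' q' ξ
      = ENNReal.ofReal ((1 + en ξ ^ 2) ^ (-s)) *
          (ENNReal.ofReal ((1 + en ξ ^ 2) ^ s) * anisotropicWeight χ Θ p' q' ξ) := by
        rw [← mul_assoc, ← ENNReal.ofReal_mul (by positivity), ← rpow_add hpos, neg_add_cancel,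
          rpow_zero, ENNReal.ofReal_one, one_mul]
    _ ≤ ENNReal.ofReal ((1 + en ξ ^ 2) ^ (-s)) *
          (ENNReal.ofReal (5 ^ s) * anisotropicWeight χ Θ p q ξ) := by
        gcongr _ * ?_
        exact hχ.mul_anisotropicWeight_le Θ hs₀.le hps hqs ξ
    _ = ENNReal.ofReal ((1 + en ξ ^ 2) ^ (-s) * 5 ^ s) * anisotropicWeight χ Θ p q ξ := by
        rw [← mul_assoc, ENNReal.ofReal_mul (by positivity)]
    _ ≤ c * anisotropicWeight χ Θ p q ξ := by gcongr

variable {u : ℕ → ℝ × ℝ → ℂ} {g : ℝ × ℝ → ℂ}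

lemma ChiOK.tendsto_anorm_sub (hχ : ChiOK χ) (Θ : Polarization) (hqp' : q' ≤ p')
    (hp : p' < p) (hq : q' < q) (hu : ∀ n, Integrable (u n)) {A : ℝ≥0∞} (hA : A ≠ ∞)
    (huA : ∀ n, anorm χ Θ p q (u n) ≤ A) {M : ℝ≥0} (huM : ∀ n, ∫ x, ‖u n x‖ ≤ M)
    (hg : ∀ ξ, Tendsto (fun n => FT (u n) ξ) atTop (𝓝 (g ξ))) :
    Tendsto (fun mn : ℕ × ℕ => anorm χ Θ p' q' (u mn.1 - u mn.2)) atTop (𝓝 0) := by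
  have hsq : Tendsto (fun mn : ℕ × ℕ => anorm χ Θ p' q' (u mn.1 - u mn.2) ^ 2) atTop (𝓝 0) := by
    simp only [hχ.anorm_sq Θ p' q' ((hu _).sub (hu _)), FT_sub (hu _) (hu _), Pi.sub_apply]
    refine tendsto_lintegral_mul_enorm_sub_sq_of_weight_le (f := fun n => FT (u n))
      (w := anisotropicWeight χ Θ p q) (A := A ^ 2) (B := M)
      (hχ.measurable_anisotropicWeight Θ p' q').aemeasurable
      (fun D hD => hχ.setLIntegral_anisotropicWeight_ne_top Θ hqp' hD)
      (fun c hc => hχ.eventually_cocompact_anisotropicWeight_le Θ hp hq hc)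
      (hχ.measurable_anisotropicWeight Θ p q).aemeasurable
      (fun n => (continuous_FT (hu n)).aestronglyMeasurable) ENNReal.coe_ne_top
      (fun n ξ => enorm_le_coe.2 ((norm_FT_le _ ξ).trans (huM n))) hg
      (ENNReal.pow_ne_top hA) fun n => ?_
    rw [← hχ.anorm_sq Θ p q (hu n)]
    gcongr
    exact huA n
  simpa only [ENNReal.pow_rpow_inv_natCast two_ne_zero, ENNReal.zero_rpow_of_pos
    (inv_pos.2 (Nat.cast_pos.2 two_pos))] using hsq.ennrpow_const ((2 : ℕ) : ℝ)⁻¹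

theorem ChiOK.exists_subseq_tendsto_anorm_sub (hχ : ChiOK χ) (Θ : Polarization) {K : Set (ℝ × ℝ)}
    (hK : Bornology.IsBounded K) (hq₀ : 0 ≤ q) (hqp : q ≤ p) (hqp' : q' ≤ p') (hp : p' < p)
    (hq : q' < q) (hu : ∀ n, MemLp (u n) 2) (huK : ∀ n, support (u n) ⊆ K) {A : ℝ≥0∞}
    (hA : A ≠ ∞) (huA : ∀ n, anorm χ Θ p q (u n) ≤ A) :
    ∃ φ : ℕ → ℕ, StrictMono φ ∧
      Tendsto (fun mn : ℕ × ℕ => anorm χ Θ p' q' (u (φ mn.1) - u (φ mn.2))) atTop (𝓝 0) := by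
  have hvol : volume K ≠ ∞ := hK.measure_lt_top.ne
  have hint (n : ℕ) : Integrable (u n) :=
    integrable_of_memLp_two_of_support_subset (hu n) (huK n) hvol
  set C : ℝ≥0 := NNReal.sqrt (Real.toNNReal (32 * 5 ^ |q|))
  have hL2 (n : ℕ) : eLpNorm (u n) 2 volume ≤ C * A :=
    calc eLpNorm (u n) 2 volume ≤ wnorm q (u n) := eLpNorm_le_wnorm hq₀ (hint n) (hu n)
      _ ≤ C * anorm χ Θ p q (u n) := hχ.wnorm_le_anorm Θ hqp (hint n)
      _ ≤ C * A := by gcongr; exact huA n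
  obtain ⟨M, hM⟩ := ENNReal.exists_ne_top.1
    ⟨C * A * volume K ^ (1 / 2 : ℝ), by finiteness, rfl⟩
  have hL1 (n : ℕ) : ∫ x, ‖u n x‖ ≤ M := by
    rw [integral_norm_eq_lintegral_enorm (hu n).1, ← eLpNorm_one_eq_lintegral_enorm]
    refine ENNReal.toReal_le_coe_of_le_coe ?_
    rw [← hM]
    refine (eLpNorm_one_le_of_support_subset (hu n).1 (huK n)).trans ?_
    gcongr
    exact hL2 n
  obtain ⟨φ, hφ, g, hg⟩ := exists_subseq_tendsto_FT hK huK hint hL1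
  exact ⟨φ, hφ, hχ.tendsto_anorm_sub (u := fun n => u (φ n)) Θ hqp' hp hq (fun n => hint (φ n)) hA
    (fun n => huA (φ n)) (fun n => hL1 (φ n)) hg⟩

end Compactness

section Inclusions

variable {η δ : ℝ} {u : ℝ × ℝ → ℂ}

lemma isBounded_Rset (η δ : ℝ) : Bornology.IsBounded (Rset η δ) :=
  (Metric.isBounded_Ioo _ _).prod (Metric.isBounded_Ioo _ _)

lemma SmoothSupp.memLp_two (hu : SmoothSupp η δ u) : MemLp u 2 :=
  hu.1.continuous.memLp_of_hasCompactSupport <|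
    (isBounded_Rset η δ).isCompact_closure.of_isClosed_subset isClosed_closure
      (closure_mono hu.2)

theorem statement7_general {χ : ℝ → ℝ} (hχ : ChiOK χ) {Θ Θ' : Polarization}
    (hΘ : PolLt Θ' Θ) {K : Set (ℝ × ℝ)} (hK : Bornology.IsBounded K)
    {𝒟 : (ℝ × ℝ → ℂ) → Prop} (h𝒟 : ∀ u, 𝒟 u → MemLp u 2 ∧ support u ⊆ K)
    {p q p' q' : ℝ} (hq₀ : 0 ≤ q) (hqp : q ≤ p) (hqp' : q' ≤ p') (hp : p' < p) (hq : q' < q) :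
    ((∃ C : ℝ≥0, ∀ u : ℝ × ℝ → ℂ, ContDiff ℝ 1 u → support u ⊆ K →
        wnorm 1 u ≤ C * ENNReal.ofReal (⨆ x : ℝ × ℝ, (‖u x‖ + ‖fderiv ℝ u x‖))) ∧
      (∃ C : ℝ≥0, ∀ u : ℝ × ℝ → ℂ, 𝒟 u → anorm χ Θ p q u ≤ C * wnorm p u) ∧
      (∃ C : ℝ≥0, ∀ u : ℝ × ℝ → ℂ, 𝒟 u → eLpNorm u 2 volume ≤ C * anorm χ Θ p q u) ∧
      (∃ C : ℝ≥0, ∀ u : ℝ × ℝ → ℂ, 𝒟 u → anorm χ Θ p' q' u ≤ C * wnorm p' u) ∧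
      (∃ C : ℝ≥0, ∀ u : ℝ × ℝ → ℂ, 𝒟 u → wnorm q' u ≤ C * anorm χ Θ p' q' u)) ∧
    ((∃ C : ℝ≥0, ∀ u : ℝ × ℝ → ℂ, 𝒟 u → anorm χ Θ' p q u ≤ C * anorm χ Θ p q u) ∧
      (∃ C : ℝ≥0, ∀ u : ℝ × ℝ → ℂ, 𝒟 u → anorm χ Θ' p' q' u ≤ C * anorm χ Θ p' q' u)) ∧
    (∀ u : ℕ → (ℝ × ℝ → ℂ), (∀ n, 𝒟 (u n)) → (∀ n, anorm χ Θ p q (u n) ≤ 1) →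
      ∃ φ : ℕ → ℕ, StrictMono φ ∧
        ∀ ε' : ℝ, 0 < ε' → ∃ N : ℕ, ∀ m n : ℕ, N ≤ m → N ≤ n →
          anorm χ Θ p' q' (u (φ m) - u (φ n)) ≤ ENNReal.ofReal ε') := by
  have hint (u : ℝ × ℝ → ℂ) (hu : 𝒟 u) : Integrable u :=
    integrable_of_memLp_two_of_support_subset (h𝒟 u hu).1 (h𝒟 u hu).2 hK.measure_lt_top.ne
  refine ⟨⟨exists_wnorm_one_le hK, ⟨_, fun u hu => hχ.anorm_le_wnorm Θ hqp (hint u hu)⟩,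
    ⟨_, fun u hu => (eLpNorm_le_wnorm hq₀ (hint u hu) (h𝒟 u hu).1).trans
      (hχ.wnorm_le_anorm Θ hqp (hint u hu))⟩,
    ⟨_, fun u hu => hχ.anorm_le_wnorm Θ hqp' (hint u hu)⟩,
    ⟨_, fun u hu => hχ.wnorm_le_anorm Θ hqp' (hint u hu)⟩⟩,
    ⟨⟨_, fun u hu => hχ.anorm_le_of_polLt hΘ hqp (hint u hu)⟩,
      ⟨_, fun u hu => hχ.anorm_le_of_polLt hΘ hqp' (hint u hu)⟩⟩, fun u hu hu₁ => ?_⟩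
  obtain ⟨φ, hφ, hlim⟩ := hχ.exists_subseq_tendsto_anorm_sub Θ hK hq₀ hqp hqp' hp hq
    (fun n => (h𝒟 _ (hu n)).1) (fun n => (h𝒟 _ (hu n)).2) ENNReal.one_ne_top hu₁
  refine ⟨φ, hφ, fun ε' hε' => ?_⟩
  obtain ⟨N, hN⟩ := eventually_atTop_prod_self'.1
    (ENNReal.tendsto_nhds_zero.1 hlim _ (ENNReal.ofReal_pos.2 hε'))
  exact ⟨N, fun m n hm hn => hN m hm n hn⟩

end Inclusions

/-- Lemma 2.2. For polarizations `Θ' < Θ`: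
(a) `C¹(R) ⊂ W¹(R) ⊂ W_*(R;Θ) ⊂ L²(R)` and `W^{1-ε}(R) ⊂ W_†(R;Θ) ⊂ W^{-ε}(R)`
continuously; (b) `W_*(R;Θ) ⊂ W_*(R;Θ')` and `W_†(R;Θ) ⊂ W_†(R;Θ')` continuously;
(c) the inclusion `W_*(R;Θ) ⊂ W_†(R;Θ)` is compact (every `‖·‖_Θ`-bounded sequence has a
subsequence that is Cauchy for `|·|_Θ`). -/
theorem statement7 (r : ℕ) (hr : 3 ≤ r) (η δ ε : ℝ) (hη : 0 < η) (hδ : 0 < δ)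
    (hε₁ : 0 < ε) (hε₂ : ε < 1 / 2) (χ : ℝ → ℝ) (hχ : ChiOK χ)
    (Θ Θ' : Polarization) (hΘ : PolLt Θ' Θ) :
    -- (a) C¹(R) ⊂ W¹(R)
    ((∃ C : ℝ≥0, ∀ u : ℝ × ℝ → ℂ, ContDiff ℝ 1 u → Function.support u ⊆ Rset η δ →
        wnorm 1 u ≤ C * ENNReal.ofReal (⨆ x : ℝ × ℝ, (‖u x‖ + ‖fderiv ℝ u x‖))) ∧
    -- (a) W¹(R) ⊂ W_*(R;Θ)
      (∃ C : ℝ≥0, ∀ u : ℝ × ℝ → ℂ, SmoothSupp η δ u →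
        anorm χ Θ 1 0 u ≤ C * wnorm 1 u) ∧
    -- (a) W_*(R;Θ) ⊂ L²(R)
      (∃ C : ℝ≥0, ∀ u : ℝ × ℝ → ℂ, SmoothSupp η δ u →
        eLpNorm u 2 volume ≤ C * anorm χ Θ 1 0 u) ∧
    -- (a) W^{1-ε}(R) ⊂ W_†(R;Θ)
      (∃ C : ℝ≥0, ∀ u : ℝ × ℝ → ℂ, SmoothSupp η δ u →
        anorm χ Θ (1 - ε) (-ε) u ≤ C * wnorm (1 - ε) u) ∧
    -- (a) W_†(R;Θ) ⊂ W^{-ε}(R)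
      (∃ C : ℝ≥0, ∀ u : ℝ × ℝ → ℂ, SmoothSupp η δ u →
        wnorm (-ε) u ≤ C * anorm χ Θ (1 - ε) (-ε) u)) ∧
    -- (b)
    ((∃ C : ℝ≥0, ∀ u : ℝ × ℝ → ℂ, SmoothSupp η δ u →
        anorm χ Θ' 1 0 u ≤ C * anorm χ Θ 1 0 u) ∧
      (∃ C : ℝ≥0, ∀ u : ℝ × ℝ → ℂ, SmoothSupp η δ u →
        anorm χ Θ' (1 - ε) (-ε) u ≤ C * anorm χ Θ (1 - ε) (-ε) u)) ∧
    -- (c)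
    (∀ u : ℕ → (ℝ × ℝ → ℂ), (∀ n, SmoothSupp η δ (u n)) →
      (∀ n, anorm χ Θ 1 0 (u n) ≤ 1) →
      ∃ φ : ℕ → ℕ, StrictMono φ ∧
        ∀ ε' : ℝ, 0 < ε' → ∃ N : ℕ, ∀ m n : ℕ, N ≤ m → N ≤ n →
          anorm χ Θ (1 - ε) (-ε) (u (φ m) - u (φ n)) ≤ ENNReal.ofReal ε') := by
  exact statement7_general hχ hΘ (isBounded_Rset η δ) (fun u hu => ⟨hu.memLp_two, hu.2⟩) le_rfl
    zero_le_one (by linarith) (by linarith) (by linarith)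

end AngleMult
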